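/- arXiv:2009.11479 — 2 statements merged into one kernel-verified Lean document; each statement's English description precedes it below -/
import Mathlib

section
/- Let n ≥ 1, let μ denote Lebesgue measure on ℝⁿ, and let D₁, D₂ ⊆ ℝⁿ be measurable sets with 0 < μ(D₁) < ∞ and 0 < μ(D₂) < ∞. Let g : ℝⁿ → ℝⁿ and let (U_i)_{i∈s} be a nonempty finite family of measurable subsets covering D₁ such that for each i there exists an affine equivalence T_i of ℝⁿ with g(x) = T_i(x) for all x ∈ U_i and T_i '' U_i = D₂. Let (V_j)_{j∈t} be a nonempty finite family of measurable subsets covering D₂. Then for every i ∈ s and j ∈ t, μ(U_i ∩ g⁻¹(V_j)) / μ(D₁) ≤ (max_{j'∈t} μ(V_{j'})/μ(D₂)) · (max_{i'∈s} μ(U_{i'})/μ(D₁)). -/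
open MeasureTheory ENNReal

theorem volume_affine_image {n : ℕ} (T : (Fin n → ℝ) ≃ᵃ[ℝ] (Fin n → ℝ)) (A : Set (Fin n → ℝ)) :
    volume (T '' A) =
      ENNReal.ofReal |LinearMap.det (T.linear : (Fin n → ℝ) →ₗ[ℝ] (Fin n → ℝ))| * volume A := by
  have h : T '' A = (fun y => y + T 0) ''
      ((T.linear : (Fin n → ℝ) →ₗ[ℝ] (Fin n → ℝ)) '' A) := by
    rw [Set.image_image]
    apply Set.image_congr
    intro x _
    have := T.map_vadd 0 x
    simpa using this
  rw [h, Set.image_add_right, measure_preimage_add_right, Measure.addHaar_image_linearMap]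

/-- **Lemmas 3 and 4 combined**: if `g` identifies each region `U i` of a finite measurable
cover of `D₁` affinely onto `D₂`, and `(V j)` is a finite measurable cover of `D₂`, then the
relative volume of each region `U i ∩ g⁻¹(V j)` of the composition is bounded by the product
of the finenesses of the two covers. -/
theorem fineness_comp_le {ι κ : Type*} (n : ℕ) (hn : 1 ≤ n)
    (D₁ D₂ : Set (Fin n → ℝ)) (hD₁meas : MeasurableSet D₁) (hD₂meas : MeasurableSet D₂)
    (hD₁0 : 0 < volume D₁) (hD₁fin : volume D₁ < ⊤)
    (hD₂0 : 0 < volume D₂) (hD₂fin : volume D₂ < ⊤)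
    (g : (Fin n → ℝ) → (Fin n → ℝ))
    (s : Finset ι) (hs : s.Nonempty)
    (U : ι → Set (Fin n → ℝ))
    (hUmeas : ∀ i ∈ s, MeasurableSet (U i))
    (hUsub : ∀ i ∈ s, U i ⊆ D₁)
    (hUcover : (⋃ i ∈ s, U i) = D₁)
    (hident : ∀ i ∈ s, ∃ T : (Fin n → ℝ) ≃ᵃ[ℝ] (Fin n → ℝ),
      (∀ x ∈ U i, g x = T x) ∧ T '' U i = D₂)
    (t : Finset κ) (ht : t.Nonempty)
    (V : κ → Set (Fin n → ℝ))
    (hVmeas : ∀ j ∈ t, MeasurableSet (V j))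
    (hVsub : ∀ j ∈ t, V j ⊆ D₂)
    (hVcover : (⋃ j ∈ t, V j) = D₂) :
    ∀ i ∈ s, ∀ j ∈ t,
      volume (U i ∩ g ⁻¹' (V j)) / volume D₁ ≤
        (t.sup fun j' => volume (V j') / volume D₂) *
          (s.sup fun i' => volume (U i') / volume D₁) := by
  intro i hi j hj
  obtain ⟨T, hT, hTU⟩ := hident i hi
  have hU := volume_affine_image T (U i)
  rw [hTU] at hU
  have hW := volume_affine_image T (U i ∩ g ⁻¹' (V j))
  have hsub : T '' (U i ∩ g ⁻¹' (V j)) ⊆ V j := by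
    rintro _ ⟨x, ⟨hx, hxV⟩, rfl⟩
    rw [← hT x hx]
    exact hxV
  have hle := measure_mono (μ := volume) hsub
  rw [hW] at hle
  have key : volume (U i ∩ g ⁻¹' (V j)) ≤ volume (V j) / volume D₂ * volume (U i) := by
    rw [ENNReal.mul_comm_div, ← mul_div_assoc,
      ENNReal.le_div_iff_mul_le (Or.inl hD₂0.ne') (Or.inl hD₂fin.ne), hU, ← mul_assoc,
      mul_comm (volume (U i ∩ g ⁻¹' (V j)))]
    gcongr
  calc volume (U i ∩ g ⁻¹' (V j)) / volume D₁
      ≤ volume (V j) / volume D₂ * volume (U i) / volume D₁ := by gcongr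
    _ = (volume (V j) / volume D₂) * (volume (U i) / volume D₁) := mul_div_assoc _ _ _
    _ ≤ _ := mul_le_mul' (Finset.le_sup (f := fun j' => volume (V j') / volume D₂) hj)
        (Finset.le_sup (f := fun i' => volume (U i') / volume D₁) hi)
end

section
/- Let σ : ℝ → ℝ, let x₀ ∈ ℝ, δ > 0, and s₋, s₊ ∈ ℝ with s₋ ≠ s₊, and assume σ(x₀ + u) = σ(x₀) + s₊·u for all u ∈ [0, δ] and σ(x₀ + u) = σ(x₀) + s₋·u for all u ∈ [−δ, 0]. Then for every x ∈ [−1, 1], max(0, x) = (σ(x₀ + δ·x) − σ(x₀) − s₋·δ·x) / (δ·(s₊ − s₋)). -/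
/-- **Core of Lemma 1** (Yarotsky): a function `σ` which is affine with distinct slopes
`sminus ≠ splus` on the two sides of a breakpoint `x₀` (on intervals of radius `δ`) represents
the ReLU function on `[-1, 1]` by a fixed affine combination of one evaluation of `σ` and the
identity. -/
theorem relu_eq_affine_combination_of_breakpoint
    (σ : ℝ → ℝ) (x₀ δ sminus splus : ℝ) (hδ : 0 < δ) (hs : sminus ≠ splus)
    (hplus : ∀ u ∈ Set.Icc (0 : ℝ) δ, σ (x₀ + u) = σ x₀ + splus * u)
    (hminus : ∀ u ∈ Set.Icc (-δ) (0 : ℝ), σ (x₀ + u) = σ x₀ + sminus * u) :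
    ∀ x ∈ Set.Icc (-1 : ℝ) 1,
      max 0 x = (σ (x₀ + δ * x) - σ x₀ - sminus * δ * x) / (δ * (splus - sminus)) := by
  rintro x ⟨h1, h2⟩
  have hd : splus - sminus ≠ 0 := sub_ne_zero.mpr hs.symm
  have hne : δ * (splus - sminus) ≠ 0 := mul_ne_zero hδ.ne' hd
  rw [eq_div_iff hne]
  rcases le_total 0 x with hx | hx
  · rw [max_eq_right hx, hplus (δ * x) ⟨by positivity, by nlinarith⟩]
    ring
  · rw [max_eq_left hx, hminus (δ * x) ⟨by nlinarith, by nlinarith⟩]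
    ring
end
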